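/- For all real numbers $A$, $B$, $C$, setting $\eta = \sqrt{A^2 + B^2 + C^2}$, one has $\frac{1}{2\pi^2} \int_0^{\pi} \int_0^{2\pi} \cos\big(A \sin\theta \cos\phi + B \sin\theta \sin\phi + C \cos\theta\big)\, d\phi\, d\theta = J_0\!\Big(\frac{\eta + C}{2}\Big) J_0\!\Big(\frac{\eta - C}{2}\Big)$. -/

import Mathlib

/-- The Bessel function of the first kind of order zero, defined by its
integral representation `J₀(x) = (1/2π) ∫₀^{2π} cos(x sin t) dt`. -/
noncomputable def besselJ0 (x : ℝ) : ℝ :=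
  (1 / (2 * Real.pi)) * ∫ t in (0 : ℝ)..(2 * Real.pi), Real.cos (x * Real.sin t)

open Real intervalIntegral MeasureTheory

lemma aux_shift (f : ℝ → ℝ) (hf : Function.Periodic f (2 * π)) (c : ℝ) :
    ∫ t in (0:ℝ)..(2 * π), f (t + c) = ∫ t in (0:ℝ)..(2 * π), f t := by
  rw [intervalIntegral.integral_comp_add_right]
  have := hf.intervalIntegral_add_eq c 0
  simpa [add_comm] using this

lemma aux_two (f : ℝ → ℝ) (T : ℝ) (hc : Continuous f) (hf : Function.Periodic f T) :
    ∫ t in (0:ℝ)..(2 * T), f t = 2 * ∫ t in (0:ℝ)..T, f t := by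
  have h := hf.intervalIntegral_add_eq_add 0 T (fun _ _ => hc.intervalIntegrable _ _)
  rw [zero_add] at h
  rw [two_mul, h, two_mul]

lemma aux_dbl (f : ℝ → ℝ) (hc : Continuous f) (hf : Function.Periodic f (2 * π)) :
    ∫ t in (0:ℝ)..(2 * π), f (2 * t) = ∫ t in (0:ℝ)..(2 * π), f t := by
  rw [intervalIntegral.integral_comp_mul_left _ (two_ne_zero), mul_zero, aux_two f _ hc hf]
  simp

lemma aux_polar (p q : ℝ) : ∃ α : ℝ, ∀ t : ℝ,
    p * sin t + q * cos t = sqrt (p ^ 2 + q ^ 2) * sin (t + α) := by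
  have h1 := Complex.norm_mul_cos_arg ⟨p, q⟩
  have h2 := Complex.norm_mul_sin_arg ⟨p, q⟩
  have h3 : ‖(⟨p, q⟩ : ℂ)‖ = sqrt (p ^ 2 + q ^ 2) := by
    rw [Complex.norm_eq_sqrt_sq_add_sq]
  rw [h3] at h1 h2
  simp only at h1 h2
  refine ⟨Complex.arg ⟨p, q⟩, fun t => ?_⟩
  rw [sin_add]
  linear_combination (- sin t) * h1 - cos t * h2

lemma aux_K (p q k c : ℝ) :
    ∫ t in (0:ℝ)..(2 * π), cos (k * (p * sin t + q * cos t) + c) =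
      ∫ t in (0:ℝ)..(2 * π), cos (k * (sqrt (p ^ 2 + q ^ 2) * sin t) + c) := by
  obtain ⟨α, h⟩ := aux_polar p q
  simp_rw [h]
  refine aux_shift (fun t => cos (k * (sqrt (p ^ 2 + q ^ 2) * sin t) + c)) ?_ α
  intro t
  simp

noncomputable def auxW (x : ℝ) : ℝ := ∫ t in (0:ℝ)..(2 * π), cos (sqrt x * sin t)

lemma auxW_cont : Continuous auxW := by
  unfold auxW
  apply intervalIntegral.continuous_parametric_intervalIntegral_of_continuous'
  fun_prop

lemma aux_KW (p q : ℝ) :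
    ∫ t in (0:ℝ)..(2 * π), cos (p * sin t + q * cos t) = auxW (p ^ 2 + q ^ 2) := by
  simpa [auxW] using aux_K p q 1 0

lemma aux_swap (f : ℝ → ℝ → ℝ) (hf : Continuous (Function.uncurry f)) (a b c d : ℝ) :
    ∫ x in a..b, ∫ y in c..d, f x y = ∫ y in c..d, ∫ x in a..b, f x y := by
  apply MeasureTheory.intervalIntegral_intervalIntegral_swap
  exact (hf.continuousOn.integrableOn_compact (isCompact_uIcc.prod isCompact_uIcc)).mono_set
    (Set.prod_mono Set.uIoc_subset_uIcc Set.uIoc_subset_uIcc)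

lemma aux_lhs (A B C : ℝ) :
    2 * ∫ θ in (0 : ℝ)..π, ∫ φ in (0 : ℝ)..(2 * π),
          cos (A * sin θ * cos φ + B * sin θ * sin φ + C * cos θ) =
    ∫ s in (0:ℝ)..(2 * π), auxW (C ^ 2 + (A ^ 2 + B ^ 2) * (1 - cos s) / 2) := by
  set r := sqrt (B ^ 2 + A ^ 2) with hr
  have hr2 : r ^ 2 = A ^ 2 + B ^ 2 := by
    rw [hr, sq_sqrt (by positivity)]; ring
  have h1 : ∀ θ : ℝ, ∫ φ in (0 : ℝ)..(2 * π),
      cos (A * sin θ * cos φ + B * sin θ * sin φ + C * cos θ) =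
      ∫ φ in (0 : ℝ)..(2 * π), cos (sin θ * (r * sin φ) + C * cos θ) := by
    intro θ
    rw [← aux_K B A (sin θ) (C * cos θ)]
    congr 1; ext φ; congr 1; ring
  simp_rw [h1]
  rw [← aux_two _ π, aux_swap]
  · rw [← aux_dbl (fun s => auxW (C ^ 2 + (A ^ 2 + B ^ 2) * (1 - cos s) / 2))]
    · congr 1; ext φ
      have := aux_KW (r * sin φ) C
      calc _ = _ := by congr 1; ext θ; congr 1; ring
        _ = _ := this
        _ = _ := by
          congr 1
          rw [mul_pow, hr2, cos_two_mul, cos_sq']; ring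
    · exact auxW_cont.comp (by fun_prop)
    · intro s; simp
  · unfold Function.uncurry; fun_prop
  · apply intervalIntegral.continuous_parametric_intervalIntegral_of_continuous'
    unfold Function.uncurry; fun_prop
  · intro θ
    simp only [sin_add_pi, cos_add_pi]
    congr 1; ext φ
    rw [← cos_neg]; congr 1; ring

lemma aux_odd (b : ℝ) : ∫ t in (0:ℝ)..(2 * π), sin (b * sin t) = 0 := by
  have h := aux_shift (fun t => sin (b * sin t)) (by intro t; simp) π
  simp only [sin_add_pi, mul_neg, sin_neg, intervalIntegral.integral_neg] at h
  linarith

lemma aux_rhs (a b : ℝ) :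
    (∫ t in (0:ℝ)..(2 * π), cos (a * sin t)) * (∫ t in (0:ℝ)..(2 * π), cos (b * sin t)) =
    ∫ s in (0:ℝ)..(2 * π), auxW ((a - b) ^ 2 + (4 * a * b) * (1 - cos s) / 2) := by
  have h1 : ∀ t : ℝ, ∫ s in (0:ℝ)..(2 * π), cos (a * sin (s + t) - b * sin t) =
      (∫ s in (0:ℝ)..(2 * π), cos (a * sin s)) * cos (b * sin t) := by
    intro t
    rw [aux_shift (fun s => cos (a * sin s - b * sin t)) (by intro s; simp) t]
    simp_rw [cos_sub]
    rw [intervalIntegral.integral_add, intervalIntegral.integral_mul_const,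
      intervalIntegral.integral_mul_const, aux_odd]
    · ring
    · exact Continuous.intervalIntegrable (by fun_prop) _ _
    · exact Continuous.intervalIntegrable (by fun_prop) _ _
  rw [← intervalIntegral.integral_const_mul]
  simp_rw [← h1]
  rw [aux_swap]
  · congr 1; ext s
    have h2 : ∀ t : ℝ, a * sin (s + t) - b * sin t =
        (a * cos s - b) * sin t + (a * sin s) * cos t := by
      intro t; rw [sin_add]; ring
    simp_rw [h2]
    rw [aux_KW]
    congr 1
    linear_combination a ^ 2 * sin_sq_add_cos_sq s
  · unfold Function.uncurry; fun_prop

/-- Master closed-form expectation (Lemmas 2–4 of the paper): the average of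
the cosine of a linear phase in a random direction, with elevation uniform on
`[0, π]` and azimuth uniform on `[0, 2π]`, independently. -/
theorem expectation_cos_random_direction (A B C : ℝ) :
    (1 / (2 * Real.pi ^ 2)) *
        ∫ θ in (0 : ℝ)..Real.pi, ∫ φ in (0 : ℝ)..(2 * Real.pi),
          Real.cos (A * Real.sin θ * Real.cos φ + B * Real.sin θ * Real.sin φ +
            C * Real.cos θ) =
      besselJ0 ((Real.sqrt (A ^ 2 + B ^ 2 + C ^ 2) + C) / 2) *
        besselJ0 ((Real.sqrt (A ^ 2 + B ^ 2 + C ^ 2) - C) / 2) := by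
  have hL := aux_lhs A B C
  set η := sqrt (A ^ 2 + B ^ 2 + C ^ 2) with hη
  have hη2 : η ^ 2 = A ^ 2 + B ^ 2 + C ^ 2 := sq_sqrt (by positivity)
  have hR := aux_rhs ((η + C) / 2) ((η - C) / 2)
  have e1 : ((η + C) / 2 - (η - C) / 2) = C := by ring
  have e2 : 4 * ((η + C) / 2) * ((η - C) / 2) = A ^ 2 + B ^ 2 := by
    linear_combination hη2
  rw [e1, e2, ← hL] at hR
  unfold besselJ0
  rw [mul_mul_mul_comm, hR]
  field_simp
  try ring
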